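/- arXiv:1710.00216 — 2 statements merged into one kernel-verified Lean document; each statement's English description precedes it below -/
import Mathlib

section
/- For every k ∈ (0,1) the following three quantities are strictly positive: ι₄(k) = (2 − k²)K(k) − 2E(k), ι₅(k) = (2 − k²)E(k)K(k) + (1 − k²)K(k)² − 3E(k)², and ι₆(k) = E(k) − (1 − k²)K(k). -/
open Real Set Filter Topology

/-- Complete elliptic integral of the first kind. -/
noncomputable def K (k : ℝ) : ℝ :=
  ∫ t in (0:ℝ)..(π/2), 1 / Real.sqrt (1 - k^2 * Real.sin t ^ 2)

/-- Complete elliptic integral of the second kind. -/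
noncomputable def E (k : ℝ) : ℝ :=
  ∫ t in (0:ℝ)..(π/2), Real.sqrt (1 - k^2 * Real.sin t ^ 2)

noncomputable def ι₄ (k : ℝ) : ℝ := (2 - k^2) * K k - 2 * E k

noncomputable def ι₅ (k : ℝ) : ℝ :=
  (2 - k^2) * E k * K k + (1 - k^2) * (K k)^2 - 3 * (E k)^2

noncomputable def ι₆ (k : ℝ) : ℝ := E k - (1 - k^2) * K k

/-!
All three quantities vanish at `k = 0`, so it is enough that their derivatives are positive. From
`E' = (E - K) / k` and `K' = (E / (1 - k²) - K) / k` one computes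
* `ι₆' = k K`;
* `ι₄' = k ι₆ / (1 - k²)`;
* `ι₅' = (k⁴ E² - (4 - k²)(1 - k²)(K - E)²) / (k (1 - k²))`.

Positivity of the last one amounts to `K - E < k² E / √((4 - k²)(1 - k²))`. The difference of the
two sides, multiplied by the integrating factor `√(4 - k²) + √(1 - k²)`, again vanishes at `0`, and
its derivative is `E` times an explicit positive function containing the square of
`√(4 - k²) - 2 √(1 - k²)`.
-/

section Calculus

theorem pos_of_hasDerivAt_pos {f f' : ℝ → ℝ} {a b x : ℝ} (hf : ContinuousOn f (Ico a b))
    (hderiv : ∀ y ∈ Ioo a b, HasDerivAt f (f' y) y) (hf' : ∀ y ∈ Ioo a b, 0 < f' y)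
    (ha : 0 ≤ f a) (hx : x ∈ Ioo a b) : 0 < f x := by
  have hmono : StrictMonoOn f (Ico a b) := by
    refine strictMonoOn_of_deriv_pos (convex_Ico a b) hf fun y hy ↦ ?_
    rw [interior_Ico] at hy
    exact (hderiv y hy).deriv ▸ hf' y hy
  exact ha.trans_lt (hmono ⟨le_rfl, hx.1.trans hx.2⟩ ⟨hx.1.le, hx.2⟩ hx.1)

theorem hasDerivAt_intervalIntegral_of_continuousOn {V : Type*} [NormedAddCommGroup V]
    [NormedSpace ℝ V] {F F' : ℝ → ℝ → V} {s : Set ℝ} {a b x : ℝ} (hs : IsOpen s) (hx : x ∈ s)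
    (hF : ∀ y ∈ s, ContinuousOn (F y) (uIcc a b))
    (hF' : ContinuousOn (Function.uncurry F') (s ×ˢ uIcc a b))
    (hderiv : ∀ y ∈ s, ∀ t ∈ uIcc a b, HasDerivAt (F · t) (F' y t) y) :
    HasDerivAt (fun y ↦ ∫ t in a..b, F y t) (∫ t in a..b, F' x t) x := by
  obtain ⟨c, hc, hcx, hcs⟩ := exists_mem_nhds_isCompact_mapsTo continuous_id (hs.mem_nhds hx)
  obtain ⟨C, hC⟩ := (hcx.prod isCompact_uIcc).exists_bound_of_continuousOn
    (hF'.mono (prod_mono_left hcs))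
  have measurable_of_continuousOn {g : ℝ → V} (hg : ContinuousOn g (uIcc a b)) :=
    (hg.mono uIoc_subset_uIcc).aestronglyMeasurable (μ := MeasureTheory.volume) measurableSet_uIoc
  refine (intervalIntegral.hasDerivAt_integral_of_dominated_loc_of_deriv_le (bound := fun _ ↦ C)
    hc ?_ (hF x hx).intervalIntegrable ?_ ?_ intervalIntegrable_const ?_).2
  · filter_upwards [hs.mem_nhds hx] with y hy using measurable_of_continuousOn (hF y hy)
  · exact measurable_of_continuousOn
      (hF'.comp (by fun_prop : Continuous fun t ↦ (x, t)).continuousOn fun t ht ↦ ⟨hx, ht⟩)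
  · exact .of_forall fun t ht y hy ↦ hC (y, t) ⟨hy, uIoc_subset_uIcc ht⟩
  · exact .of_forall fun t ht y hy ↦ hderiv y (hcs hy) t (uIoc_subset_uIcc ht)

theorem hasDerivAt_sqrt_sub_sq {c x : ℝ} (h : x ^ 2 < c) :
    HasDerivAt (fun y ↦ √(c - y ^ 2)) (-x / √(c - x ^ 2)) x := by
  convert ((hasDerivAt_pow 2 x).const_sub c).sqrt (sub_pos.2 h).ne' using 1
  norm_num
  ring

end Calculus

/-- The square `Δ(t)² = 1 - k² sin² t` of Legendre's radical `Δ`, on which both kinds of elliptic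
integrals are built. -/
noncomputable def deltaSq (k t : ℝ) : ℝ := 1 - k ^ 2 * sin t ^ 2

/-- The moment `∫₀^{π/2} Δ(t)^{2p} dt`, which is `E` for `p = 1/2` and `K` for `p = -1/2`; it puts
the two kinds, and the `Δ⁻³` appearing in `K'`, into one family. -/
noncomputable def ellipticMoment (p k : ℝ) : ℝ := ∫ t in (0 : ℝ)..(π / 2), deltaSq k t ^ p

section EllipticMoment

variable {k : ℝ}

theorem isOpen_setOf_sq_lt_one : IsOpen {x : ℝ | x ^ 2 < 1} :=
  isOpen_lt (by fun_prop) continuous_const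

theorem deltaSq_pos (hk : k ^ 2 < 1) (t : ℝ) : 0 < deltaSq k t := by
  unfold deltaSq
  nlinarith [sin_sq_le_one t, sq_nonneg (sin t), sq_nonneg k]

theorem continuous_deltaSq_rpow (hk : k ^ 2 < 1) (p : ℝ) : Continuous fun t ↦ deltaSq k t ^ p :=
  Continuous.rpow_const (by unfold deltaSq; fun_prop) fun t ↦ .inl (deltaSq_pos hk t).ne'

theorem intervalIntegrable_deltaSq_rpow (hk : k ^ 2 < 1) (p a b : ℝ) :
    IntervalIntegrable (fun t ↦ deltaSq k t ^ p) MeasureTheory.volume a b :=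
  (continuous_deltaSq_rpow hk p).intervalIntegrable a b

theorem hasDerivAt_deltaSq_modulus (k t : ℝ) :
    HasDerivAt (deltaSq · t) (-(2 * k * sin t ^ 2)) k := by
  unfold deltaSq
  simpa using ((hasDerivAt_pow 2 k).mul_const (sin t ^ 2)).const_sub 1

theorem hasDerivAt_deltaSq (k t : ℝ) :
    HasDerivAt (deltaSq k) (-(k ^ 2 * (2 * sin t * cos t))) t := by
  unfold deltaSq
  simpa using (((hasDerivAt_sin t).pow 2).const_mul (k ^ 2)).const_sub 1

theorem ellipticMoment_pos (hk : k ^ 2 < 1) (p : ℝ) : 0 < ellipticMoment p k :=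
  intervalIntegral.intervalIntegral_pos_of_pos (intervalIntegrable_deltaSq_rpow hk p _ _)
    (fun t ↦ rpow_pos_of_pos (deltaSq_pos hk t) p) pi_div_two_pos

theorem hasDerivAt_ellipticMoment_integral (hk : k ^ 2 < 1) (p : ℝ) :
    HasDerivAt (ellipticMoment p)
      (∫ t in (0 : ℝ)..(π / 2), -(2 * k * sin t ^ 2) * p * deltaSq k t ^ (p - 1)) k := by
  refine hasDerivAt_intervalIntegral_of_continuousOn (F := fun x t ↦ deltaSq x t ^ p)
    (F' := fun x t ↦ -(2 * x * sin t ^ 2) * p * deltaSq x t ^ (p - 1)) isOpen_setOf_sq_lt_one hk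
    (fun x hx ↦ (continuous_deltaSq_rpow hx p).continuousOn) ?_ fun x hx t _ ↦
      (hasDerivAt_deltaSq_modulus x t).rpow_const (.inl (deltaSq_pos hx t).ne')
  refine ContinuousOn.mul (by fun_prop) (ContinuousOn.rpow_const ?_ fun z hz ↦
    .inl (deltaSq_pos hz.1 z.2).ne')
  unfold deltaSq
  fun_prop

theorem continuousAt_ellipticMoment (hk : k ^ 2 < 1) (p : ℝ) :
    ContinuousAt (ellipticMoment p) k :=
  (hasDerivAt_ellipticMoment_integral hk p).continuousAt

theorem hasDerivAt_ellipticMoment (hk₀ : k ≠ 0) (hk : k ^ 2 < 1) (p : ℝ) :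
    HasDerivAt (ellipticMoment p)
      (2 * p / k * (ellipticMoment p k - ellipticMoment (p - 1) k)) k := by
  refine (hasDerivAt_ellipticMoment_integral hk p).congr_deriv ?_
  unfold ellipticMoment
  rw [← intervalIntegral.integral_sub (intervalIntegrable_deltaSq_rpow hk p _ _)
    (intervalIntegrable_deltaSq_rpow hk (p - 1) _ _), ← intervalIntegral.integral_const_mul]
  refine intervalIntegral.integral_congr fun t _ ↦ ?_
  have hΔ : deltaSq k t ^ p = deltaSq k t * deltaSq k t ^ (p - 1) := by
    rw [rpow_sub_one (deltaSq_pos hk t).ne', mul_div_cancel₀ _ (deltaSq_pos hk t).ne']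
  simp only [hΔ]
  generalize deltaSq k t ^ (p - 1) = y
  unfold deltaSq
  field_simp
  ring

/-- The integrand of the left side minus the right side is the `t`-derivative of
`k² sin t cos t Δ(t)^{2p}`. -/
theorem ellipticMoment_contiguous (hk : k ^ 2 < 1) (p : ℝ) :
    2 * p * (1 - k ^ 2) * ellipticMoment (p - 1) k + 2 * (p + 1) * ellipticMoment (p + 1) k =
      (2 * p + 1) * (2 - k ^ 2) * ellipticMoment p k := by
  have hint (c q : ℝ) := (intervalIntegrable_deltaSq_rpow hk q 0 (π / 2)).const_mul c
  have hderiv (t : ℝ) : HasDerivAt (fun t ↦ k ^ 2 * (sin t * cos t) * deltaSq k t ^ p)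
      (2 * p * (1 - k ^ 2) * deltaSq k t ^ (p - 1) + 2 * (p + 1) * deltaSq k t ^ (p + 1)
        - (2 * p + 1) * (2 - k ^ 2) * deltaSq k t ^ p) t := by
    have hΔ := (deltaSq_pos hk t).ne'
    refine ((((hasDerivAt_sin t).fun_mul (hasDerivAt_cos t)).const_mul (k ^ 2)).fun_mul
      ((hasDerivAt_deltaSq k t).rpow_const (p := p) (.inl hΔ))).congr_deriv ?_
    have hsin : k ^ 2 * sin t ^ 2 = 1 - deltaSq k t := by unfold deltaSq; ring
    have hcos : k ^ 2 * cos t ^ 2 = k ^ 2 - 1 + deltaSq k t := by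
      rw [cos_sq', mul_sub, hsin]; ring
    rw [rpow_sub_one hΔ, rpow_add_one hΔ]
    generalize deltaSq k t ^ p = y
    field_simp
    linear_combination (y * deltaSq k t - 2 * y * p * (k ^ 2 * sin t ^ 2)) * hcos
      + (-y * deltaSq k t - 2 * y * p * (k ^ 2 - 1 + deltaSq k t)) * hsin
  have hzero := intervalIntegral.integral_eq_sub_of_hasDerivAt (fun t _ ↦ hderiv t)
    (((hint _ _).add (hint _ _)).sub (hint _ _))
  rw [intervalIntegral.integral_sub ((hint _ _).add (hint _ _)) (hint _ _),
    intervalIntegral.integral_add (hint _ _) (hint _ _)] at hzero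
  simp only [intervalIntegral.integral_const_mul, sin_zero, cos_pi_div_two, mul_zero, zero_mul,
    sub_zero] at hzero
  exact sub_eq_zero.1 hzero

end EllipticMoment

section CompleteEllipticIntegrals

variable {k : ℝ}

theorem E_eq_ellipticMoment : E = ellipticMoment (1 / 2) := by
  ext k
  simp only [E, ellipticMoment, deltaSq, sqrt_eq_rpow]

theorem K_eq_ellipticMoment (hk : k ^ 2 < 1) : K k = ellipticMoment (-1 / 2) k := by
  refine intervalIntegral.integral_congr fun t _ ↦ ?_
  change 1 / √(deltaSq k t) = deltaSq k t ^ (-1 / 2 : ℝ)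
  rw [neg_div, rpow_neg (deltaSq_pos hk t).le, ← sqrt_eq_rpow, one_div]

theorem K_eventuallyEq_ellipticMoment (hk : k ^ 2 < 1) : K =ᶠ[𝓝 k] ellipticMoment (-1 / 2) := by
  filter_upwards [isOpen_setOf_sq_lt_one.mem_nhds hk] with x hx
    using K_eq_ellipticMoment hx

theorem E_pos (hk : k ^ 2 < 1) : 0 < E k := E_eq_ellipticMoment ▸ ellipticMoment_pos hk _

theorem K_pos (hk : k ^ 2 < 1) : 0 < K k := K_eq_ellipticMoment hk ▸ ellipticMoment_pos hk _

theorem E_zero : E 0 = π / 2 := by simp [E]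

theorem K_zero : K 0 = π / 2 := by simp [K]

theorem continuousAt_E (hk : k ^ 2 < 1) : ContinuousAt E k :=
  E_eq_ellipticMoment ▸ continuousAt_ellipticMoment hk _

theorem continuousAt_K (hk : k ^ 2 < 1) : ContinuousAt K k :=
  (continuousAt_ellipticMoment hk _).congr (K_eventuallyEq_ellipticMoment hk).symm

theorem ellipticMoment_neg_three_halves (hk : k ^ 2 < 1) :
    ellipticMoment (-3 / 2) k = E k / (1 - k ^ 2) := by
  have h := ellipticMoment_contiguous hk (-1 / 2)
  rw [show (-1 / 2 - 1 : ℝ) = -3 / 2 by norm_num, show (-1 / 2 + 1 : ℝ) = 1 / 2 by norm_num] at h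
  rw [E_eq_ellipticMoment, eq_div_iff (sub_pos.2 hk).ne']
  linarith

theorem hasDerivAt_E (hk₀ : k ≠ 0) (hk : k ^ 2 < 1) : HasDerivAt E ((E k - K k) / k) k := by
  have h := hasDerivAt_ellipticMoment hk₀ hk (1 / 2)
  rw [show (1 / 2 - 1 : ℝ) = -1 / 2 by norm_num] at h
  rw [E_eq_ellipticMoment, K_eq_ellipticMoment hk]
  exact h.congr_deriv (by ring)

theorem hasDerivAt_K (hk₀ : k ≠ 0) (hk : k ^ 2 < 1) :
    HasDerivAt K ((E k / (1 - k ^ 2) - K k) / k) k := by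
  have h := hasDerivAt_ellipticMoment hk₀ hk (-1 / 2)
  rw [show (-1 / 2 - 1 : ℝ) = -3 / 2 by norm_num] at h
  rw [← ellipticMoment_neg_three_halves hk, K_eq_ellipticMoment hk]
  exact (h.congr_of_eventuallyEq (K_eventuallyEq_ellipticMoment hk)).congr_deriv (by ring)

theorem hasDerivAt_K_sub_E (hk₀ : k ≠ 0) (hk : k ^ 2 < 1) :
    HasDerivAt (fun x ↦ K x - E x) (k * E k / (1 - k ^ 2)) k := by
  refine ((hasDerivAt_K hk₀ hk).fun_sub (hasDerivAt_E hk₀ hk)).congr_deriv ?_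
  have := (sub_pos.2 hk).ne'
  field_simp
  ring

theorem hasDerivAt_iota₆ (hk₀ : k ≠ 0) (hk : k ^ 2 < 1) : HasDerivAt ι₆ (k * K k) k := by
  refine ((hasDerivAt_E hk₀ hk).fun_sub
    (((hasDerivAt_pow 2 k).const_sub 1).fun_mul (hasDerivAt_K hk₀ hk))).congr_deriv ?_
  have := (sub_pos.2 hk).ne'
  field_simp
  ring

theorem hasDerivAt_iota₄ (hk₀ : k ≠ 0) (hk : k ^ 2 < 1) :
    HasDerivAt ι₄ (k * ι₆ k / (1 - k ^ 2)) k := by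
  refine ((((hasDerivAt_pow 2 k).const_sub 2).fun_mul (hasDerivAt_K hk₀ hk)).fun_sub
    ((hasDerivAt_E hk₀ hk).const_mul 2)).congr_deriv ?_
  have := (sub_pos.2 hk).ne'
  unfold ι₆
  field_simp
  ring

theorem hasDerivAt_iota₅ (hk₀ : k ≠ 0) (hk : k ^ 2 < 1) :
    HasDerivAt ι₅ ((k ^ 4 * E k ^ 2 - (4 - k ^ 2) * (1 - k ^ 2) * (K k - E k) ^ 2) /
      (k * (1 - k ^ 2))) k := by
  have hE := hasDerivAt_E hk₀ hk
  have hK := hasDerivAt_K hk₀ hk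
  have hsq (c : ℝ) := (hasDerivAt_pow 2 k).const_sub c
  refine (((((hsq 2).fun_mul hE).fun_mul hK).fun_add ((hsq 1).fun_mul (hK.fun_pow 2))).fun_sub
    ((hE.fun_pow 2).const_mul 3)).congr_deriv ?_
  have := (sub_pos.2 hk).ne'
  field_simp
  ring

end CompleteEllipticIntegrals

section Positivity

variable {k : ℝ}

theorem sq_lt_one_of_mem_Ico (hk : k ∈ Ico (0 : ℝ) 1) : k ^ 2 < 1 :=
  pow_lt_one₀ hk.1 hk.2 two_ne_zero

theorem sq_lt_one_of_mem_Ioo (hk : k ∈ Ioo (0 : ℝ) 1) : k ^ 2 < 1 :=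
  sq_lt_one_of_mem_Ico (Ioo_subset_Ico_self hk)

theorem continuousOn_E : ContinuousOn E (Ico 0 1) :=
  fun _ hk ↦ (continuousAt_E (sq_lt_one_of_mem_Ico hk)).continuousWithinAt

theorem continuousOn_K : ContinuousOn K (Ico 0 1) :=
  fun _ hk ↦ (continuousAt_K (sq_lt_one_of_mem_Ico hk)).continuousWithinAt

theorem E_lt_K (hk : k ∈ Ioo (0 : ℝ) 1) : E k < K k := by
  refine sub_pos.1 (pos_of_hasDerivAt_pos (f := fun x ↦ K x - E x)
    (continuousOn_K.sub continuousOn_E)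
    (fun x hx ↦ hasDerivAt_K_sub_E hx.1.ne' (sq_lt_one_of_mem_Ioo hx)) (fun x hx ↦ ?_)
    (by simp only [K_zero, E_zero, sub_self, le_refl]) hk)
  have hx' := sq_lt_one_of_mem_Ioo hx
  exact div_pos (mul_pos hx.1 (E_pos hx')) (sub_pos.2 hx')

theorem iota₆_pos (hk : k ∈ Ioo (0 : ℝ) 1) : 0 < ι₆ k := by
  refine pos_of_hasDerivAt_pos ?_
    (fun x hx ↦ hasDerivAt_iota₆ hx.1.ne' (sq_lt_one_of_mem_Ioo hx))
    (fun x hx ↦ mul_pos hx.1 (K_pos (sq_lt_one_of_mem_Ioo hx))) (by simp [ι₆, K_zero, E_zero]) hk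
  have hE := continuousOn_E
  have hK := continuousOn_K
  unfold ι₆
  fun_prop

theorem iota₄_pos (hk : k ∈ Ioo (0 : ℝ) 1) : 0 < ι₄ k := by
  refine pos_of_hasDerivAt_pos ?_
    (fun x hx ↦ hasDerivAt_iota₄ hx.1.ne' (sq_lt_one_of_mem_Ioo hx))
    (fun x hx ↦ div_pos (mul_pos hx.1 (iota₆_pos hx)) (sub_pos.2 (sq_lt_one_of_mem_Ioo hx)))
    (by simp [ι₄, K_zero, E_zero]) hk
  have hE := continuousOn_E
  have hK := continuousOn_K
  unfold ι₄
  fun_prop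

/-- The gap in the inequality `K - E ≤ k² E / √((4 - k²)(1 - k²))`, multiplied by the integrating
factor `√(4 - k²) + √(1 - k²)`, which removes `K` from its derivative. -/
noncomputable def weightedGap (k : ℝ) : ℝ :=
  (√(4 - k ^ 2) + √(1 - k ^ 2)) *
    (k ^ 2 * E k / (√(4 - k ^ 2) * √(1 - k ^ 2)) - (K k - E k))

theorem hasDerivAt_weightedGap (hk₀ : k ≠ 0) (hk : k ^ 2 < 1) :
    HasDerivAt weightedGap (k * E k * (√(4 - k ^ 2) - 2 * √(1 - k ^ 2)) ^ 2 *
      (√(4 - k ^ 2) + √(1 - k ^ 2)) / (√(4 - k ^ 2) ^ 3 * √(1 - k ^ 2) ^ 3)) k := by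
  have ha : 0 < √(4 - k ^ 2) := sqrt_pos.2 (by linarith)
  have hb : 0 < √(1 - k ^ 2) := sqrt_pos.2 (by linarith)
  have ha_sq : √(4 - k ^ 2) ^ 2 = 4 - k ^ 2 := sq_sqrt (by linarith)
  have hb_sq : √(1 - k ^ 2) ^ 2 = 1 - k ^ 2 := sq_sqrt (by linarith)
  have da := hasDerivAt_sqrt_sub_sq (c := 4) (by linarith : k ^ 2 < 4)
  have db := hasDerivAt_sqrt_sub_sq hk
  refine ((da.fun_add db).fun_mul ((((hasDerivAt_pow 2 k).fun_mul (hasDerivAt_E hk₀ hk)).fun_div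
    (da.fun_mul db) (by positivity)).fun_sub (hasDerivAt_K_sub_E hk₀ hk))).congr_deriv ?_
  generalize √(4 - k ^ 2) = a at *
  generalize √(1 - k ^ 2) = b at *
  rw [← hb_sq]
  field_simp
  linear_combination k * E k * (a + b) *
    ((2 * b ^ 2 + k ^ 2 - 1 - a * b) * ha_sq + (4 - k ^ 2) * hb_sq)

theorem continuousOn_weightedGap : ContinuousOn weightedGap (Ico 0 1) := by
  have hE := continuousOn_E
  have hK := continuousOn_K
  have hne : ∀ x ∈ Ico (0 : ℝ) 1, √(4 - x ^ 2) * √(1 - x ^ 2) ≠ 0 := fun x hx ↦ by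
    have := sq_lt_one_of_mem_Ico hx
    exact mul_ne_zero (sqrt_ne_zero'.2 (by linarith)) (sqrt_ne_zero'.2 (by linarith))
  unfold weightedGap
  fun_prop (disch := assumption)

theorem weightedGap_pos (hk : k ∈ Ioo (0 : ℝ) 1) : 0 < weightedGap k := by
  refine pos_of_hasDerivAt_pos continuousOn_weightedGap
    (fun x hx ↦ hasDerivAt_weightedGap hx.1.ne' (sq_lt_one_of_mem_Ioo hx)) (fun x hx ↦ ?_)
    (by simp [weightedGap, K_zero, E_zero]) hk
  have hx_sq := sq_lt_one_of_mem_Ioo hx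
  have hx_pos := hx.1
  have hE := E_pos hx_sq
  have hb : 0 < √(1 - x ^ 2) := sqrt_pos.2 (by linarith)
  have hba : 2 * √(1 - x ^ 2) < √(4 - x ^ 2) := by
    refine lt_sqrt_of_sq_lt ?_
    rw [mul_pow, sq_sqrt (by linarith)]
    linarith [pow_pos hx_pos 2]
  have ha : 0 < √(4 - x ^ 2) := by linarith
  have := (sub_pos.2 hba).ne'
  positivity

theorem K_sub_E_lt (hk : k ∈ Ioo (0 : ℝ) 1) :
    K k - E k < k ^ 2 * E k / (√(4 - k ^ 2) * √(1 - k ^ 2)) :=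
  sub_pos.1 (pos_of_mul_pos_right (weightedGap_pos hk) (by positivity))

theorem mul_sq_K_sub_E_lt (hk : k ∈ Ioo (0 : ℝ) 1) :
    (4 - k ^ 2) * (1 - k ^ 2) * (K k - E k) ^ 2 < k ^ 4 * E k ^ 2 := by
  have hk' := sq_lt_one_of_mem_Ioo hk
  have ha : 0 < 4 - k ^ 2 := by linarith
  have hb : 0 < 1 - k ^ 2 := by linarith
  have h := pow_lt_pow_left₀ (K_sub_E_lt hk) (sub_pos.2 (E_lt_K hk)).le two_ne_zero
  rw [div_pow, mul_pow √_, sq_sqrt ha.le, sq_sqrt hb.le, lt_div_iff₀' (mul_pos ha hb)] at h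
  exact h.trans_eq (by ring)

theorem iota₅_pos (hk : k ∈ Ioo (0 : ℝ) 1) : 0 < ι₅ k := by
  refine pos_of_hasDerivAt_pos ?_
    (fun x hx ↦ hasDerivAt_iota₅ hx.1.ne' (sq_lt_one_of_mem_Ioo hx))
    (fun x hx ↦ div_pos (sub_pos.2 (mul_sq_K_sub_E_lt hx))
      (mul_pos hx.1 (sub_pos.2 (sq_lt_one_of_mem_Ioo hx)))) ?_ hk
  · have hE := continuousOn_E
    have hK := continuousOn_K
    unfold ι₅
    fun_prop
  · refine le_of_eq ?_
    simp only [ι₅, K_zero, E_zero]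
    ring

end Positivity

/-- For every `k ∈ (0,1)` the quantities `ι₄(k)`, `ι₅(k)`, `ι₆(k)` are strictly positive. -/
theorem iota₄_iota₅_iota₆_pos :
    ∀ k ∈ Set.Ioo (0:ℝ) 1, 0 < ι₄ k ∧ 0 < ι₅ k ∧ 0 < ι₆ k :=
  fun _ hk ↦ ⟨iota₄_pos hk, iota₅_pos hk, iota₆_pos hk⟩
end

section
/- As k → 0⁺ the following Taylor expansions hold: −√(ι₄(k)/√(1 − k²)) = −(√π/4)k² + o(k³); (k⁴K(k) − ι₄(k)(8 − 7k²))/(12√(ι₄(k)³(1 − k²)^{3/2})) = 1/√π + (3/(16√π))k² + o(k³); √(ι₄(k)) = (√π/4)k² + o(k³); and −(k⁴K(k)(1 − k²) − ι₄(k)(8 − 9k² + k⁴))/(12 ι₄(k)^{3/2}(1 − k²)) = 1/√π − (3/(16√π))k² + o(k³). Here ι₄(k) = (2 − k²)K(k) − 2E(k), and f(k) = g(k) + o(k³) means (f(k) − g(k))/k³ → 0 as k → 0⁺. -/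
open Real Set Filter Topology

/-!
The binomial series of `(1 + x) ^ p`, integrated termwise at `x = -k² sin² t` against the Wallis
moments, expands `K` and `E` in powers of `k²`. In `ι₄ = (2 - k²) K - 2 E` the terms of order `1`
and `k²` cancel, so `ι₄ = (π / 16) k⁴ (1 + (3 / 4) k² + O(k⁴))`. In the numerators
`k⁴ K - ι₄ (8 - 7 k²)` and `ι₄ (8 - k²) - k⁴ K` the terms of order `k⁴` cancel as well, leaving
`(3 π / 16) k⁶`; this is why `K` and `E` are needed up to `O(k¹⁰)`. After these powers of `k` are
divided out, every quantity in question is a product of real powers of functions of the form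
`a + b k² + O(k⁴)`.
-/

open Asymptotics

theorem isBigO_mul_of_continuousAt {X R 𝕜 : Type*} [TopologicalSpace X] [SeminormedRing R]
    [NormedField 𝕜] {c f : X → R} {g : X → 𝕜} {x : X} (hc : ContinuousAt c x)
    (hf : f =O[𝓝 x] g) : (fun y => c y * f y) =O[𝓝 x] g := by
  simpa only [one_mul] using (hc.tendsto.isBigO_one 𝕜).mul hf

theorem ringChoose_succ {F : Type*} [Field F] [CharZero F] (a : F) (n : ℕ) :
    Ring.choose a (n + 1) = Ring.choose a n * (a - n) / (n + 1) := by
  simp only [Ring.choose_eq_smul, descPochhammer_succ_right, Polynomial.smeval_mul,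
    Polynomial.smeval_sub, Polynomial.smeval_X, Polynomial.smeval_natCast, Nat.factorial_succ,
    smul_eq_mul, nsmul_eq_mul, pow_zero, pow_one, mul_one, Nat.cast_mul, Nat.cast_succ, mul_inv]
  ring

theorem one_add_rpow_sub_sum_isBigO (p : ℝ) (n : ℕ) :
    (fun x : ℝ => (1 + x) ^ p - ∑ i ∈ Finset.range n, Ring.choose p i * x ^ i)
      =O[𝓝 0] fun x => x ^ n := by
  simpa [FormalMultilinearSeries.partialSum, binomialSeries,
    FormalMultilinearSeries.coeff_ofScalars, mul_comm] using
    ((one_add_rpow_hasFPowerSeriesAt_zero (a := p)).isBigO_sub_partialSum_pow n).trans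
      (isBigO_of_le (g := fun x : ℝ => x ^ n) _ fun x => by simp)

theorem integral_comp_mul_isBigO_pow {F : Type*} [NormedAddCommGroup F] [NormedSpace ℝ F]
    {φ : ℝ → F} {u : ℝ → ℝ} {n : ℕ} {a b : ℝ}
    (hφ : φ =O[𝓝 0] fun x => x ^ n) (hu : ContinuousOn u (uIcc a b)) :
    (fun x => ∫ t in a..b, φ (x * u t)) =O[𝓝 0] fun x => x ^ n := by
  obtain ⟨M, hM⟩ := isCompact_uIcc.exists_bound_of_continuousOn hu
  obtain ⟨C, hC, hφ⟩ := hφ.exists_pos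
  obtain ⟨δ, hδ, hball⟩ := Metric.eventually_nhds_iff.1 hφ.bound
  have h_small : ∀ᶠ x : ℝ in 𝓝 0, |x| * M < δ :=
    (Continuous.tendsto' (by fun_prop) 0 0 (by simp)).eventually_lt_const hδ
  refine IsBigO.of_bound (C * M ^ n * |b - a|) ?_
  filter_upwards [h_small] with x hx
  have h_pointwise : ∀ t ∈ uIoc a b, ‖φ (x * u t)‖ ≤ C * M ^ n * ‖x ^ n‖ := fun t ht => by
    have h_mul : |x * u t| ≤ |x| * M := by
      rw [abs_mul]
      exact mul_le_mul_of_nonneg_left (hM t (uIoc_subset_uIcc ht)) (abs_nonneg x)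
    calc ‖φ (x * u t)‖ ≤ C * ‖(x * u t) ^ n‖ := hball (by simpa using h_mul.trans_lt hx)
      _ = C * |x * u t| ^ n := by rw [norm_pow, Real.norm_eq_abs]
      _ ≤ C * (|x| * M) ^ n := by gcongr
      _ = C * M ^ n * ‖x ^ n‖ := by rw [norm_pow, Real.norm_eq_abs]; ring
  exact (intervalIntegral.norm_integral_le_of_norm_le_const h_pointwise).trans_eq (by ring)

theorem integral_one_add_mul_rpow_sub_sum_isBigO {u : ℝ → ℝ} {a b : ℝ}
    (hu : ContinuousOn u (uIcc a b)) (p : ℝ) (n : ℕ) :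
    (fun x => (∫ t in a..b, (1 + x * u t) ^ p) -
        ∑ i ∈ Finset.range n, Ring.choose p i * (∫ t in a..b, u t ^ i) * x ^ i)
      =O[𝓝 0] fun x => x ^ n := by
  obtain ⟨M, hM⟩ := isCompact_uIcc.exists_bound_of_continuousOn hu
  have h_small : ∀ᶠ x : ℝ in 𝓝 0, |x| * M < 1 :=
    (Continuous.tendsto' (by fun_prop) 0 0 (by simp)).eventually_lt_const one_pos
  refine (integral_comp_mul_isBigO_pow (one_add_rpow_sub_sum_isBigO p n) hu).congr' ?_ .rfl
  filter_upwards [h_small] with x hx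
  have h_pos : ∀ t ∈ uIcc a b, 0 < 1 + x * u t := fun t ht => by
    have : |x * u t| < 1 := by
      rw [abs_mul]
      exact (mul_le_mul_of_nonneg_left (hM t ht) (abs_nonneg x)).trans_lt hx
    linarith [(abs_lt.1 this).1]
  have h_rpow : IntervalIntegrable (fun t => (1 + x * u t) ^ p) MeasureTheory.volume a b :=
    ((continuousOn_const.add (continuousOn_const.mul hu)).rpow_const
      fun t ht => .inl (h_pos t ht).ne').intervalIntegrable
  have h_term (i : ℕ) : IntervalIntegrable (fun t => Ring.choose p i * (x * u t) ^ i)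
      MeasureTheory.volume a b :=
    (continuousOn_const.mul ((continuousOn_const.mul hu).pow i)).intervalIntegrable
  have h_sum : IntervalIntegrable (fun t => ∑ i ∈ Finset.range n, Ring.choose p i * (x * u t) ^ i)
      MeasureTheory.volume a b := by
    simpa only [Finset.sum_fn] using IntervalIntegrable.sum _ fun i _ => h_term i
  rw [intervalIntegral.integral_sub h_rpow h_sum,
    intervalIntegral.integral_finsetSum fun i _ => h_term i]
  simp only [mul_pow, ← mul_assoc, mul_right_comm _ (∫ _ in a..b, _),
    intervalIntegral.integral_const_mul]

theorem integral_sin_pow_even_zero_pi_div_two (n : ℕ) :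
    ∫ t in (0 : ℝ)..(π / 2), sin t ^ (2 * n) =
      π / 2 * ∏ i ∈ Finset.range n, (2 * (i : ℝ) + 1) / (2 * i + 2) := by
  induction n with
  | zero => simp
  | succ n ih =>
    rw [Nat.mul_succ, integral_sin_pow, ih, Finset.prod_range_succ]
    push_cast
    rw [sin_zero, cos_pi_div_two, zero_pow (Nat.succ_ne_zero _)]
    ring

theorem integral_one_sub_sq_mul_sin_sq_rpow_isBigO (p : ℝ) (n : ℕ) :
    (fun k => (∫ t in (0 : ℝ)..(π / 2), (1 - k ^ 2 * sin t ^ 2) ^ p) -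
        π / 2 * ∑ i ∈ Finset.range n, Ring.choose p i * (-1) ^ i *
          (∏ j ∈ Finset.range i, (2 * (j : ℝ) + 1) / (2 * j + 2)) * k ^ (2 * i))
      =O[𝓝 0] fun k => k ^ (2 * n) := by
  have h_sq : Tendsto (fun k : ℝ => -k ^ 2) (𝓝 0) (𝓝 0) :=
    Continuous.tendsto' (by fun_prop) _ _ (by simp)
  have h := (integral_one_add_mul_rpow_sub_sum_isBigO (u := fun t => sin t ^ 2) (a := 0)
    (b := π / 2) (by fun_prop) p n).comp_tendsto h_sq
  refine (h.congr_left fun k => ?_).trans (isBigO_of_le _ fun k => by simp [pow_mul])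
  simp only [Function.comp_apply, neg_mul, ← sub_eq_add_neg, ← pow_mul,
    integral_sin_pow_even_zero_pi_div_two, Finset.mul_sum]
  congr 1
  refine Finset.sum_congr rfl fun i _ => ?_
  rw [neg_pow, ← pow_mul]
  ring

theorem K_sub_isBigO_pow_ten :
    (fun k => K k - π / 2 * (1 + 1 / 4 * k ^ 2 + 9 / 64 * k ^ 4 + 25 / 256 * k ^ 6
      + 1225 / 16384 * k ^ 8)) =O[𝓝 0] fun k => k ^ 10 := by
  refine (integral_one_sub_sq_mul_sin_sq_rpow_isBigO (-(1 / 2)) 5).congr' ?_ .rfl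
  have h_small : ∀ᶠ k : ℝ in 𝓝 0, k ^ 2 < 1 :=
    (Continuous.tendsto' (by fun_prop) 0 0 (by simp)).eventually_lt_const one_pos
  filter_upwards [h_small] with k hk
  have h_int (t : ℝ) : (1 - k ^ 2 * sin t ^ 2) ^ (-(1 / 2) : ℝ) = 1 / √(1 - k ^ 2 * sin t ^ 2) := by
    rw [rpow_neg (by nlinarith [sin_sq_le_one t, sq_nonneg k]), ← sqrt_eq_rpow, one_div]
  simp_rw [h_int, K]
  norm_num [Finset.sum_range_succ, Finset.prod_range_succ, ringChoose_succ]

theorem E_sub_isBigO_pow_ten :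
    (fun k => E k - π / 2 * (1 - 1 / 4 * k ^ 2 - 3 / 64 * k ^ 4 - 5 / 256 * k ^ 6
      - 175 / 16384 * k ^ 8)) =O[𝓝 0] fun k => k ^ 10 := by
  refine (integral_one_sub_sq_mul_sin_sq_rpow_isBigO (1 / 2) 5).congr_left fun k => ?_
  simp_rw [← sqrt_eq_rpow, E]
  norm_num [Finset.sum_range_succ, Finset.prod_range_succ, ringChoose_succ]
  ring

theorem ι₄_sub_isBigO_pow_ten :
    (fun k => ι₄ k - π / 16 * k ^ 4 * (1 + 3 / 4 * k ^ 2 + 75 / 128 * k ^ 4))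
      =O[𝓝 0] fun k => k ^ 10 := by
  have h_K := isBigO_mul_of_continuousAt (c := fun k => 2 - k ^ 2) (by fun_prop)
    K_sub_isBigO_pow_ten
  have h_rest : (fun k : ℝ => π / 2 * (-(1225 / 16384)) * k ^ 10) =O[𝓝 0] fun k => k ^ 10 :=
    isBigO_const_mul_self _ _ _
  refine ((h_K.sub (E_sub_isBigO_pow_ten.const_mul_left 2)).add h_rest).congr_left fun k => ?_
  rw [ι₄]
  ring

/-- `f` has the expansion `f k = a + b k² + O(k⁴)` as `k → 0`, `k ≠ 0`. The point `k = 0` is left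
out because the quotients expanded below take the junk value `x / 0 = 0` there. -/
def HasEvenExpansion (f : ℝ → ℝ) (a b : ℝ) : Prop :=
  (fun k => f k - (a + b * k ^ 2)) =O[𝓝[≠] 0] fun k => k ^ 4

namespace HasEvenExpansion

variable {f g : ℝ → ℝ} {a b c d : ℝ}

theorem congr (hf : HasEvenExpansion f a b) (hac : a = c) (hbd : b = d) (hfg : f =ᶠ[𝓝[≠] 0] g) :
    HasEvenExpansion g c d :=
  IsBigO.congr' hf (hfg.mono fun k hk => by simp only [hk, hac, hbd]) .rfl

theorem add_mul_sq (a b : ℝ) : HasEvenExpansion (fun k => a + b * k ^ 2) a b := by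
  simpa only [HasEvenExpansion, sub_self] using isBigO_zero _ _

theorem add (hf : HasEvenExpansion f a b) (hg : HasEvenExpansion g c d) :
    HasEvenExpansion (fun k => f k + g k) (a + c) (b + d) :=
  (IsBigO.add hf hg).congr_left fun k => by ring

theorem const_mul (hf : HasEvenExpansion f a b) (c : ℝ) :
    HasEvenExpansion (fun k => c * f k) (c * a) (c * b) :=
  (IsBigO.const_mul_left hf c).congr_left fun k => by ring

theorem sub_const_isBigO_sq (hf : HasEvenExpansion f a b) :
    (fun k => f k - a) =O[𝓝[≠] 0] fun k => k ^ 2 := by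
  have h_pow : (fun k : ℝ => k ^ 4) =O[𝓝[≠] 0] fun k => k ^ 2 :=
    (isLittleO_pow_pow (by norm_num)).isBigO.mono nhdsWithin_le_nhds
  refine ((IsBigO.trans hf h_pow).add (isBigO_const_mul_self b _ _)).congr_left fun k => ?_
  ring

theorem tendsto (hf : HasEvenExpansion f a b) : Tendsto f (𝓝[≠] 0) (𝓝 a) := by
  have h_sq : Tendsto (fun k : ℝ => k ^ 2) (𝓝[≠] 0) (𝓝 0) :=
    (Continuous.tendsto' (by fun_prop) _ _ (by simp)).mono_left nhdsWithin_le_nhds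
  exact tendsto_sub_nhds_zero_iff.1 (hf.sub_const_isBigO_sq.trans_tendsto h_sq)

theorem mul (hf : HasEvenExpansion f a b) (hg : HasEvenExpansion g c d) :
    HasEvenExpansion (fun k => f k * g k) (a * c) (a * d + b * c) := by
  have h_fst : (fun k => (f k - (a + b * k ^ 2)) * g k) =O[𝓝[≠] 0] fun k => k ^ 4 := by
    simpa using IsBigO.mul hf (hg.tendsto.isBigO_one ℝ)
  have h_snd : (fun k => b * (k ^ 2 * (g k - c))) =O[𝓝[≠] 0] fun k => k ^ 4 :=
    (((isBigO_refl (fun k : ℝ => k ^ 2) _).mul hg.sub_const_isBigO_sq).const_mul_left b).congr_right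
      fun k => by ring
  refine ((h_fst.add h_snd).add (IsBigO.const_mul_left hg a)).congr_left fun k => ?_
  ring

theorem comp_analyticAt {φ : ℝ → ℝ} (hφ : AnalyticAt ℝ φ a) (hf : HasEvenExpansion f a b) :
    HasEvenExpansion (fun k => φ (f k)) (φ a) (deriv φ a * b) := by
  obtain ⟨q, hq⟩ := hφ
  have h_sub : Tendsto (fun k => f k - a) (𝓝[≠] 0) (𝓝 0) := tendsto_sub_nhds_zero_iff.2 hf.tendsto
  have h_taylor : (fun k => φ (f k) - (φ a + deriv φ a * (f k - a))) =O[𝓝[≠] 0] fun k => k ^ 4 := by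
    refine (((hq.isBigO_sub_partialSum_pow 2).comp_tendsto h_sub).congr_left fun k => ?_).trans
      ((hf.sub_const_isBigO_sq.norm_left.pow 2).congr_right fun k => by ring)
    simp [FormalMultilinearSeries.partialSum, Finset.sum_range_succ, hq.deriv, ← hq.coeff_zero 1,
      mul_comm]
  refine (h_taylor.add (IsBigO.const_mul_left hf (deriv φ a))).congr_left fun k => ?_
  ring

theorem rpow (hf : HasEvenExpansion f a b) (ha : 0 < a) (p : ℝ) :
    HasEvenExpansion (fun k => f k ^ p) (a ^ p) (p * a ^ (p - 1) * b) := by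
  have h := hf.comp_analyticAt (contDiffAt_rpow_const_of_ne (p := p) ha.ne').analyticAt
  rwa [Real.deriv_rpow_const] at h

theorem div_of_isBigO {m : ℕ} (hc : c ≠ 0)
    (hf : (fun k => f k - c * k ^ m * (a + b * k ^ 2)) =O[𝓝 0] fun k => k ^ (m + 4)) :
    HasEvenExpansion (fun k => f k / (c * k ^ m)) a b := by
  have h_div := ((hf.mono nhdsWithin_le_nhds).const_mul_left c⁻¹).mul
    (isBigO_refl (fun k : ℝ => (k ^ m)⁻¹) (𝓝[≠] 0))
  refine h_div.congr' ?_ ?_ <;> filter_upwards [self_mem_nhdsWithin] with k (hk : k ≠ 0)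
  · field_simp
  · rw [pow_add, mul_comm (k ^ m), mul_inv_cancel_right₀ (pow_ne_zero m hk)]

theorem tendsto_div_cube (hf : HasEvenExpansion f a b) :
    Tendsto (fun k => (f k - (a + b * k ^ 2)) / k ^ 3) (𝓝[>] 0) (𝓝 0) := by
  have h_pow : (fun k : ℝ => k ^ 4) =o[𝓝[≠] 0] fun k => k ^ 3 :=
    (isLittleO_pow_pow (by norm_num)).mono nhdsWithin_le_nhds
  exact (IsBigO.trans_isLittleO hf h_pow).tendsto_div_nhds_zero.mono_left
    (nhdsWithin_mono _ fun k hk => ne_of_gt hk)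

end HasEvenExpansion

theorem hasEvenExpansion_ι₄_div :
    HasEvenExpansion (fun k => ι₄ k / (π / 16 * k ^ 4)) 1 (3 / 4) := by
  refine .div_of_isBigO (by positivity) ?_
  have h_rest : (fun k : ℝ => π / 16 * (75 / 128) * k ^ 8) =O[𝓝 0] fun k => k ^ 8 :=
    isBigO_const_mul_self _ _ _
  have h_pow : (fun k : ℝ => k ^ 10) =O[𝓝 0] fun k => k ^ 8 :=
    (isLittleO_pow_pow (by norm_num)).isBigO
  refine ((ι₄_sub_isBigO_pow_ten.trans h_pow).add h_rest).congr_left fun k => ?_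
  ring

theorem hasEvenExpansion_K_sub_ι₄_div :
    HasEvenExpansion (fun k => (k ^ 4 * K k - 8 * ι₄ k) / (3 * π / 16 * k ^ 6))
      (-(4 / 3)) (-(19 / 16)) := by
  refine .div_of_isBigO (by positivity) ?_
  have h_K := isBigO_mul_of_continuousAt (c := fun k => k ^ 4) (by fun_prop) K_sub_isBigO_pow_ten
  have h_rest := isBigO_mul_of_continuousAt (x := 0)
    (c := fun k => π / 2 * (25 / 256 + 1225 / 16384 * k ^ 2)) (by fun_prop)
    (isBigO_refl (fun k => k ^ 10) _)
  refine ((h_K.sub (ι₄_sub_isBigO_pow_ten.const_mul_left 8)).add h_rest).congr_left fun k => ?_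
  ring

theorem hasEvenExpansion_K_sub_ι₄_mul_div :
    HasEvenExpansion (fun k => (k ^ 4 * K k - ι₄ k * (8 - 7 * k ^ 2)) / (3 * π / 16 * k ^ 6))
      1 (9 / 16) := by
  -- `7 / 3` is the quotient of `7 k² ι₄ / (3 π / 16 * k ^ 6)` by `ι₄ / (π / 16 * k ^ 4)`.
  have h := hasEvenExpansion_K_sub_ι₄_div.add (hasEvenExpansion_ι₄_div.const_mul (7 / 3))
  refine h.congr (by norm_num) (by norm_num) ?_
  filter_upwards [self_mem_nhdsWithin] with k (hk : k ≠ 0)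
  field_simp
  ring

theorem hasEvenExpansion_ι₄_mul_sub_K_div :
    HasEvenExpansion (fun k => (ι₄ k * (8 - k ^ 2) - k ^ 4 * K k) / (3 * π / 16 * k ^ 6))
      1 (15 / 16) := by
  have h := (hasEvenExpansion_K_sub_ι₄_div.const_mul (-1)).add
    (hasEvenExpansion_ι₄_div.const_mul (-(1 / 3)))
  refine h.congr (by norm_num) (by norm_num) ?_
  filter_upwards [self_mem_nhdsWithin] with k (hk : k ≠ 0)
  field_simp
  ring

theorem eventually_ι₄_pos : ∀ᶠ k in 𝓝[≠] 0, 0 < ι₄ k := by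
  filter_upwards [hasEvenExpansion_ι₄_div.tendsto.eventually_const_lt one_pos, self_mem_nhdsWithin]
    with k h_pos (hk : k ≠ 0)
  exact (div_pos_iff_of_pos_right (by positivity)).1 h_pos

theorem eventually_one_sub_sq_pos : ∀ᶠ k : ℝ in 𝓝[≠] 0, 0 < 1 - k ^ 2 :=
  nhdsWithin_le_nhds <|
    (Continuous.tendsto' (by fun_prop) 0 1 (by simp)).eventually_const_lt one_pos

section Normalization

variable {k : ℝ}

theorem sqrt_eq_mul_normalized_rpow (hk : k ≠ 0) (x : ℝ) :
    √x = √π / 4 * k ^ 2 * (x / (π / 16 * k ^ 4)) ^ (1 / 2 : ℝ) := by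
  have h_x : x = (√π / 4 * k ^ 2) ^ 2 * (x / (π / 16 * k ^ 4)) := by
    rw [mul_pow, div_pow, sq_sqrt pi_pos.le]
    field_simp
    norm_num
  conv_lhs => rw [h_x, sqrt_mul (by positivity), sqrt_sq (by positivity), sqrt_eq_rpow (x / _)]

theorem div_rpow_three_halves_eq_normalized (hk : k ≠ 0) {x : ℝ} (hx : 0 < x) (y : ℝ) :
    y / (12 * x ^ (3 / 2 : ℝ)) =
      1 / √π * (y / (3 * π / 16 * k ^ 6) * (x / (π / 16 * k ^ 4)) ^ (-(3 / 2) : ℝ)) := by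
  have h_scale : x ^ (3 / 2 : ℝ) =
      √π * π / 64 * k ^ 6 * (x / (π / 16 * k ^ 4)) ^ (3 / 2 : ℝ) := by
    have h_cube (z : ℝ) (hz : 0 ≤ z) : z ^ (3 / 2 : ℝ) = √z ^ 3 := by
      rw [sqrt_eq_rpow, ← rpow_natCast, ← rpow_mul hz]
      norm_num
    rw [h_cube x hx.le, h_cube _ (by positivity), sqrt_eq_mul_normalized_rpow hk x, mul_pow,
      ← sqrt_eq_rpow, mul_pow, div_pow, pow_succ √π, sq_sqrt pi_pos.le]
    ring
  rw [h_scale, rpow_neg (by positivity)]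
  field_simp
  ring

end Normalization

theorem hasEvenExpansion_sqrt_ι₄ : HasEvenExpansion (fun k => √(ι₄ k)) 0 (√π / 4) := by
  have h := (HasEvenExpansion.add_mul_sq 0 (√π / 4)).mul
    (hasEvenExpansion_ι₄_div.rpow one_pos (1 / 2))
  refine h.congr (by simp) (by simp) ?_
  filter_upwards [self_mem_nhdsWithin] with k hk
  rw [zero_add, ← sqrt_eq_mul_normalized_rpow hk]

theorem hasEvenExpansion_one_sub_sq_rpow (p : ℝ) :
    HasEvenExpansion (fun k => (1 - k ^ 2) ^ p) 1 (-p) := by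
  simpa [← sub_eq_add_neg] using (HasEvenExpansion.add_mul_sq 1 (-1)).rpow one_pos p

theorem hasEvenExpansion_neg_sqrt_ι₄_div :
    HasEvenExpansion (fun k => -√(ι₄ k / √(1 - k ^ 2))) 0 (-(√π / 4)) := by
  have h := (hasEvenExpansion_sqrt_ι₄.mul
    (hasEvenExpansion_one_sub_sq_rpow (-(1 / 4)))).const_mul (-1)
  refine h.congr (by norm_num) (by norm_num) ?_
  filter_upwards [eventually_one_sub_sq_pos] with k h_pos
  have h_root : √√(1 - k ^ 2) = (1 - k ^ 2) ^ (1 / 4 : ℝ) := by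
    rw [sqrt_eq_rpow, sqrt_eq_rpow, ← rpow_mul h_pos.le]
    norm_num
  rw [sqrt_div' _ (sqrt_nonneg _), h_root, rpow_neg h_pos.le, div_eq_mul_inv (√(ι₄ k)),
    neg_one_mul]

theorem hasEvenExpansion_K_sub_ι₄_mul_div_sqrt :
    HasEvenExpansion (fun k => (k ^ 4 * K k - ι₄ k * (8 - 7 * k ^ 2)) /
        (12 * √(ι₄ k ^ 3 * (1 - k ^ 2) ^ (3 / 2 : ℝ))))
      (1 / √π) (3 / (16 * √π)) := by
  have h := ((hasEvenExpansion_K_sub_ι₄_mul_div.mul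
    (hasEvenExpansion_ι₄_div.rpow one_pos (-(3 / 2)))).const_mul (1 / √π)).mul
    (hasEvenExpansion_one_sub_sq_rpow (-(3 / 4)))
  refine h.congr (by simp) (by simp only [one_rpow]; field_simp; norm_num) ?_
  filter_upwards [eventually_one_sub_sq_pos, eventually_ι₄_pos, self_mem_nhdsWithin]
    with k h_pos h_ι₄ hk
  have h_sqrt : √(ι₄ k ^ 3 * (1 - k ^ 2) ^ (3 / 2 : ℝ)) =
      ι₄ k ^ (3 / 2 : ℝ) * (1 - k ^ 2) ^ (3 / 4 : ℝ) := by
    rw [sqrt_eq_rpow, mul_rpow (by positivity) (by positivity), ← rpow_natCast, ← rpow_mul h_ι₄.le,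
      ← rpow_mul h_pos.le]
    norm_num
  rw [h_sqrt, ← mul_assoc 12, ← div_div _ (12 * _), div_rpow_three_halves_eq_normalized hk h_ι₄,
    rpow_neg h_pos.le, div_eq_mul_inv _ ((1 - k ^ 2) ^ _)]

theorem hasEvenExpansion_neg_K_sub_ι₄_mul_div_rpow :
    HasEvenExpansion (fun k => -((k ^ 4 * K k * (1 - k ^ 2) - ι₄ k * (8 - 9 * k ^ 2 + k ^ 4)) /
        (12 * ι₄ k ^ (3 / 2 : ℝ) * (1 - k ^ 2))))
      (1 / √π) (-(3 / (16 * √π))) := by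
  have h := (hasEvenExpansion_ι₄_mul_sub_K_div.mul
    (hasEvenExpansion_ι₄_div.rpow one_pos (-(3 / 2)))).const_mul (1 / √π)
  refine h.congr (by simp) (by simp only [one_rpow]; field_simp; norm_num) ?_
  filter_upwards [eventually_one_sub_sq_pos, eventually_ι₄_pos, self_mem_nhdsWithin]
    with k h_pos h_ι₄ hk
  have h_factor : k ^ 4 * K k * (1 - k ^ 2) - ι₄ k * (8 - 9 * k ^ 2 + k ^ 4) =
      -(ι₄ k * (8 - k ^ 2) - k ^ 4 * K k) * (1 - k ^ 2) := by ring
  rw [h_factor, mul_div_mul_right _ _ h_pos.ne', neg_div, neg_neg,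
    div_rpow_three_halves_eq_normalized hk h_ι₄]

/-- Taylor expansions as `k → 0⁺`:
`−√(ι₄(k)/√(1 − k²)) = −(√π/4)k² + o(k³)`,
`(k⁴K(k) − ι₄(k)(8 − 7k²))/(12√(ι₄(k)³(1 − k²)^{3/2})) = 1/√π + (3/(16√π))k² + o(k³)`,
`√(ι₄(k)) = (√π/4)k² + o(k³)`, and
`−(k⁴K(k)(1 − k²) − ι₄(k)(8 − 9k² + k⁴))/(12 ι₄(k)^{3/2}(1 − k²)) = 1/√π − (3/(16√π))k² + o(k³)`. -/
theorem taylor_expansions_at_zero :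
    Tendsto (fun k : ℝ =>
        ((-Real.sqrt (ι₄ k / Real.sqrt (1 - k^2))) - (-(Real.sqrt π / 4) * k^2)) / k^3)
      (nhdsWithin 0 (Set.Ioi 0)) (nhds 0) ∧
    Tendsto (fun k : ℝ =>
        ((k^4 * K k - ι₄ k * (8 - 7 * k^2)) /
            (12 * Real.sqrt ((ι₄ k)^3 * (1 - k^2) ^ ((3:ℝ)/2)))
          - (1 / Real.sqrt π + 3 / (16 * Real.sqrt π) * k^2)) / k^3)
      (nhdsWithin 0 (Set.Ioi 0)) (nhds 0) ∧
    Tendsto (fun k : ℝ =>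
        (Real.sqrt (ι₄ k) - (Real.sqrt π / 4) * k^2) / k^3)
      (nhdsWithin 0 (Set.Ioi 0)) (nhds 0) ∧
    Tendsto (fun k : ℝ =>
        (-((k^4 * K k * (1 - k^2) - ι₄ k * (8 - 9 * k^2 + k^4)) /
            (12 * (ι₄ k) ^ ((3:ℝ)/2) * (1 - k^2)))
          - (1 / Real.sqrt π - 3 / (16 * Real.sqrt π) * k^2)) / k^3)
      (nhdsWithin 0 (Set.Ioi 0)) (nhds 0) := by
  exact ⟨by simpa only [zero_add] using hasEvenExpansion_neg_sqrt_ι₄_div.tendsto_div_cube,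
    hasEvenExpansion_K_sub_ι₄_mul_div_sqrt.tendsto_div_cube,
    by simpa only [zero_add] using hasEvenExpansion_sqrt_ι₄.tendsto_div_cube,
    by simpa only [neg_mul, ← sub_eq_add_neg] using
      hasEvenExpansion_neg_K_sub_ι₄_mul_div_rpow.tendsto_div_cube⟩
end
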